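/- Set r_k = ⌈(3/2)·log k⌉ and Z_{k,r} = Σ_{i ∈ {1,…,r}^k} exp(−Σ_{j ∈ P(i)} Δ(j)). There exists a random variable Z on the same probability space, distributed as a rate-1 exponential, such that Z_{k,r_k} → Z in probability as k → ∞. -/

import Mathlib

open MeasureTheory Filter

/-- The rate-1 exponential distribution: density `e^{-z}` on `(0, ∞)`. -/
noncomputable def expMeasure : Measure ℝ :=
  ((volume : Measure ℝ).restrict (Set.Ioi 0)).withDensity fun z =>
    ENNReal.ofReal (Real.exp (-z))

/-- A finite nonempty sequence of positive integers, encoded as (initial segment, last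
entry). -/
abbrev SeqIdx := List ℕ+ × ℕ+

/-- `treeSum Δ k r = Z_{k,r} = Σ_{i ∈ {1,…,r}^k} exp(-Σ_{j ∈ P(i)} Δ(j))
= Σ_{i ∈ {1,…,r}^k} ∏_{ℓ=1}^{k} ∏_{j=1}^{i_ℓ} exp(-Δ(i_1,…,i_{ℓ-1},j))`,
where `i ∈ {1,…,r}^k` is encoded as `i : Fin k → Fin r` via `i_ℓ = (i ℓ) + 1`. -/
noncomputable def treeSum {Ω : Type*} (Δ : SeqIdx → Ω → ℝ) (k r : ℕ) (ω : Ω) : ℝ :=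
  ∑ i : Fin k → Fin r, ∏ ℓ : Fin k, ∏ j ∈ Finset.range ((i ℓ : ℕ) + 1),
    Real.exp (-(Δ ((List.ofFn fun m : Fin k => Nat.succPNat (i m)).take ℓ.val,
      Nat.succPNat j) ω))

/-!
The first node splits the tree of clocks into three independent parts: the clock `U = Δ(1)`, the
clocks below `(1)` and the clocks at or below its later siblings; the last two are copies of the
whole tree. If `Y` and `Y'` are functions of these two copies, `e^{-U} (Y + Y')` is again a function
of the tree. This operation preserves the rate-1 exponential law and averages means.
A generation of `Z_{k,r}` iterates it `r` times, starting from `0`; discarding the siblings after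
the `r`-th costs a factor `1 - 2^{-r}` in the mean, hence at most `k 2^{-r}` in `L¹` over `k`
generations. If the discarded part is kept, means are preserved and, on centred inputs, a
generation multiplies the second moment by `(1 + 3^{-r}) / 2 ≤ 2 / 3`. Hence after `k` completed
generations it hardly matters whether the leaves carry the constant `1` or exponential variables,
and in the second case the law is exactly exponential. All error terms are in `L¹`, so the `Z_{k,r}`
form a Cauchy family as soon as `k 2^{-r} → 0`, and their limit is exponential.
-/

open Topology
open ProbabilityTheory hiding expMeasure

section ExponentialLaw

theorem integral_expMeasure {F : Type*} [NormedAddCommGroup F] [NormedSpace ℝ F] (f : ℝ → F) :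
    ∫ x, f x ∂expMeasure = ∫ x in Set.Ioi (0 : ℝ), Real.exp (-x) • f x := by
  unfold expMeasure
  rw [integral_withDensity_eq_integral_toReal_smul (by fun_prop) (by simp)]
  simp [ENNReal.toReal_ofReal (Real.exp_nonneg _)]

theorem integrable_expMeasure_iff {F : Type*} [NormedAddCommGroup F] [NormedSpace ℝ F]
    {f : ℝ → F} :
    Integrable f expMeasure ↔ IntegrableOn (fun x => Real.exp (-x) • f x) (Set.Ioi (0 : ℝ)) := by
  unfold expMeasure
  rw [integrable_withDensity_iff_integrable_smul' (by fun_prop) (by simp)]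
  simp [ENNReal.toReal_ofReal (Real.exp_nonneg _), IntegrableOn]

instance isProbabilityMeasure_expMeasure : IsProbabilityMeasure expMeasure where
  measure_univ := by
    rw [expMeasure, withDensity_apply _ MeasurableSet.univ, Measure.restrict_univ,
      ← ofReal_integral_eq_lintegral_ofReal (integrableOn_exp_neg_Ioi 0)
        (ae_of_all _ fun _ => Real.exp_nonneg _), integral_exp_neg_Ioi_zero, ENNReal.ofReal_one]

theorem ae_nonneg_expMeasure : ∀ᵐ x ∂expMeasure, 0 ≤ x :=
  (withDensity_absolutelyContinuous _ _).ae_le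
    ((ae_restrict_mem measurableSet_Ioi).mono fun _ hx => (Set.mem_Ioi.1 hx).le)

theorem integrable_pow_expMeasure (n : ℕ) : Integrable (fun x : ℝ => x ^ n) expMeasure := by
  rw [integrable_expMeasure_iff]
  simpa using Real.GammaIntegral_convergent (s := n + 1) (by positivity)

theorem integral_pow_expMeasure (n : ℕ) : ∫ x, x ^ n ∂expMeasure = n.factorial := by
  rw [integral_expMeasure, ← Real.Gamma_nat_eq_factorial,
    Real.Gamma_eq_integral (by positivity)]
  simp

theorem memLp_two_id_expMeasure : MemLp id 2 expMeasure :=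
  (memLp_two_iff_integrable_sq aestronglyMeasurable_id).2 (integrable_pow_expMeasure 2)

theorem integral_id_expMeasure : ∫ x, x ∂expMeasure = 1 := by
  simpa using integral_pow_expMeasure 1

theorem variance_id_expMeasure : Var[id; expMeasure] = 1 := by
  rw [variance_eq_sub memLp_two_id_expMeasure]
  simp only [Pi.pow_apply, id_eq, integral_pow_expMeasure, integral_id_expMeasure]
  norm_num [Nat.factorial]

theorem integral_cexp_mul_expMeasure {a : ℂ} (ha : a.re < 1) :
    ∫ x : ℝ, Complex.exp (a * x) ∂expMeasure = (1 - a)⁻¹ := by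
  have hexp (x : ℝ) :
      Real.exp (-x) • Complex.exp (a * x) = Complex.exp ((a - 1) * x) := by
    rw [Complex.real_smul, Complex.ofReal_exp, ← Complex.exp_add]
    push_cast
    ring_nf
  simp only [integral_expMeasure, hexp]
  rw [integral_exp_mul_complex_Ioi (by simpa using ha), Complex.ofReal_zero, mul_zero,
    Complex.exp_zero, neg_div, ← div_neg, neg_sub, one_div]

theorem charFun_expMeasure (t : ℝ) : charFun expMeasure t = (1 - t * Complex.I)⁻¹ := by
  rw [charFun_apply_real, ← integral_cexp_mul_expMeasure (by simp)]
  simp only [mul_right_comm]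

theorem integral_exp_neg_pow_expMeasure (n : ℕ) :
    ∫ x, Real.exp (-x) ^ n ∂expMeasure = (n + 1 : ℝ)⁻¹ := by
  have hexp (x : ℝ) : ((Real.exp (-x) ^ n : ℝ) : ℂ) = Complex.exp (-n * x) := by
    rw [← Real.exp_nat_mul, Complex.ofReal_exp]
    push_cast
    ring_nf
  apply Complex.ofReal_injective
  rw [← integral_complex_ofReal]
  simp only [hexp]
  rw [integral_cexp_mul_expMeasure (by
    rw [Complex.neg_re, Complex.natCast_re]
    linarith [n.cast_nonneg (α := ℝ)]), sub_neg_eq_add, add_comm]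
  push_cast
  rfl

theorem norm_inv_one_sub_le_one {z : ℂ} (hz : z.re ≤ 0) : ‖(1 - z)⁻¹‖ ≤ 1 := by
  rw [norm_inv]
  refine inv_le_one_of_one_le₀ ?_
  calc (1 : ℝ) ≤ (1 - z).re := by simpa using hz
    _ ≤ ‖1 - z‖ := Complex.re_le_norm _

theorem hasDerivAt_neg_exp_neg_mul_inv_one_sub {a : ℂ} {u : ℝ} (hu : 1 - a * Real.exp (-u) ≠ 0) :
    HasDerivAt (fun u : ℝ => -(Real.exp (-u) : ℂ) * (1 - a * Real.exp (-u))⁻¹)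
      (Real.exp (-u) • ((1 - a * Real.exp (-u))⁻¹) ^ 2) u := by
  have hexp : HasDerivAt (fun u : ℝ => (Real.exp (-u) : ℂ)) (-Real.exp (-u) : ℝ) u := by
    simpa using (hasDerivAt_neg u).exp.ofReal_comp
  refine (hexp.fun_neg.mul (((hexp.const_mul a).const_sub 1).fun_inv hu)).congr_deriv ?_
  rw [Complex.real_smul]
  push_cast at hu ⊢
  field_simp
  ring

theorem integral_inv_one_sub_mul_exp_neg_sq {a : ℂ} (ha : a.re ≤ 0) :
    ∫ u : ℝ, ((1 - a * Real.exp (-u))⁻¹) ^ 2 ∂expMeasure = (1 - a)⁻¹ := by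
  have hre (u : ℝ) : (a * Real.exp (-u)).re ≤ 0 := by
    rw [Complex.re_mul_ofReal]
    exact mul_nonpos_of_nonpos_of_nonneg ha (Real.exp_nonneg _)
  have hne (u : ℝ) : 1 - a * Real.exp (-u) ≠ 0 := fun h => by
    have := hre u
    rw [← sub_eq_zero.1 h, Complex.one_re] at this
    linarith
  have hint : IntegrableOn (fun u : ℝ => Real.exp (-u) • ((1 - a * Real.exp (-u))⁻¹) ^ 2)
      (Set.Ioi 0) := by
    refine (integrableOn_exp_neg_Ioi 0).mono' ?_ (ae_of_all _ fun u => ?_)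
    · exact Continuous.aestronglyMeasurable (by fun_prop (disch := exact hne))
    · rw [norm_smul, norm_pow, Real.norm_of_nonneg (Real.exp_nonneg _)]
      exact mul_le_of_le_one_right (Real.exp_nonneg _)
        (pow_le_one₀ (norm_nonneg _) (norm_inv_one_sub_le_one (hre u)))
  have hlim : Tendsto (fun u : ℝ => -(Real.exp (-u) : ℂ) * (1 - a * Real.exp (-u))⁻¹)
      atTop (𝓝 0) := by
    have hexp : Tendsto (fun u : ℝ => (Real.exp (-u) : ℂ)) atTop (𝓝 0) := by
      simpa using Real.tendsto_exp_neg_atTop_nhds_zero.ofReal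
    simpa using hexp.neg.mul (((hexp.const_mul a).const_sub 1).inv₀ (by simp))
  rw [integral_expMeasure, integral_Ioi_of_hasDerivAt_of_tendsto'
    (fun u _ => hasDerivAt_neg_exp_neg_mul_inv_one_sub (hne u)) hint hlim]
  simp

theorem measurePreserving_exp_neg_mul :
    MeasurePreserving (fun p : ℝ × ℝ => Real.exp (-p.1) * p.2)
      (expMeasure.prod (expMeasure ∗ expMeasure)) expMeasure := by
  have hmeas : Measurable fun p : ℝ × ℝ => Real.exp (-p.1) * p.2 := by fun_prop
  refine ⟨hmeas, ?_⟩
  have := Measure.isProbabilityMeasure_map (μ := expMeasure.prod (expMeasure ∗ expMeasure))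
    hmeas.aemeasurable
  refine Measure.ext_of_charFun (funext fun t => ?_)
  have hint : Integrable
      (fun p : ℝ × ℝ => Complex.exp (t * ↑(Real.exp (-p.1) * p.2) * Complex.I))
      (expMeasure.prod (expMeasure ∗ expMeasure)) :=
    .of_bound (C := 1) (Continuous.aestronglyMeasurable (by fun_prop)) (ae_of_all _ fun p => by
      rw [← Complex.ofReal_mul, Complex.norm_exp_ofReal_mul_I])
  calc charFun ((expMeasure.prod (expMeasure ∗ expMeasure)).map _) t
      = ∫ u, ∫ s, Complex.exp (t * ↑(Real.exp (-u) * s) * Complex.I) ∂(expMeasure ∗ expMeasure)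
          ∂expMeasure := by
        rw [charFun_apply_real, integral_map hmeas.aemeasurable
          (Continuous.aestronglyMeasurable (by fun_prop)), integral_prod _ hint]
    _ = ∫ u, charFun (expMeasure ∗ expMeasure) (t * Real.exp (-u)) ∂expMeasure := by
        simp only [charFun_apply_real, Complex.ofReal_mul, mul_assoc]
    _ = ∫ u : ℝ, ((1 - t * Complex.I * Real.exp (-u))⁻¹) ^ 2 ∂expMeasure := by
        simp only [charFun_conv, charFun_expMeasure, Complex.ofReal_mul, sq, mul_right_comm]
    _ = charFun expMeasure t := by
        rw [integral_inv_one_sub_mul_exp_neg_sq (by simp), charFun_expMeasure]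

theorem measurePreserving_exp_neg_mul_add :
    MeasurePreserving (fun q : ℝ × ℝ × ℝ => Real.exp (-q.1) * (q.2.1 + q.2.2))
      (expMeasure.prod (expMeasure.prod expMeasure)) expMeasure :=
  measurePreserving_exp_neg_mul.comp
    ((MeasurePreserving.id expMeasure).prod ⟨measurable_add, rfl⟩)

end ExponentialLaw

section Independence

variable {ι κ κ' Ω : Type*} {α : ι → Type*} [∀ i, MeasurableSpace (α i)]

theorem comap_pi_le_iSup_range (X : ∀ i, Ω → α i) (f : κ → ι) :
    MeasurableSpace.comap (fun ω k => X (f k) ω) MeasurableSpace.pi ≤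
      ⨆ i ∈ Set.range f, MeasurableSpace.comap (X i) inferInstance := by
  simp only [MeasurableSpace.pi, MeasurableSpace.comap_iSup, MeasurableSpace.comap_comp]
  exact iSup_le fun k => le_iSup₂_of_le (f k) ⟨k, rfl⟩ le_rfl

theorem indepFun_reindex_of_disjoint_range [MeasurableSpace Ω] {μ : Measure Ω}
    {X : ∀ i, Ω → α i}
    (hX : ∀ i, Measurable (X i)) (hindep : iIndepFun X μ) {f : κ → ι} {g : κ' → ι}
    (hfg : Disjoint (Set.range f) (Set.range g)) :
    IndepFun (fun ω k => X (f k) ω) (fun ω k => X (g k) ω) μ :=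
  indep_of_indep_of_le_left
    (indep_of_indep_of_le_right
      (indep_iSup_of_disjoint (fun i => (hX i).comap_le) hindep hfg)
      (comap_pi_le_iSup_range X g))
    (comap_pi_le_iSup_range X f)

end Independence

namespace SeqIdx

/-- The sequence `(1)`, the first node of the first generation. -/
def root : SeqIdx := ([], 1)

/-- The embedding `(i₁, …, i_k) ↦ (1, i₁, …, i_k)` onto the descendants of the node `(1)`. -/
def child (i : SeqIdx) : SeqIdx := (1 :: i.1, i.2)

/-- The embedding `(i₁, i₂, …, i_k) ↦ (i₁ + 1, i₂, …, i_k)` onto the nodes `(s)` with `s ≥ 2` and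
their descendants. -/
def sib : SeqIdx → SeqIdx
  | ([], s) => ([], s + 1)
  | (h :: t, s) => ((h + 1) :: t, s)

/-- The embedding `(i₁, …, i_k) ↦ (j + 1, i₁, …, i_k)` onto the descendants of the node `(j + 1)`;
`j` is indexed from `0` as in `treeSum`. -/
def descend (j : ℕ) (i : SeqIdx) : SeqIdx := (Nat.succPNat j :: i.1, i.2)

theorem child_injective : Function.Injective child := by
  rintro ⟨_, _⟩ ⟨_, _⟩ h
  simpa [child] using h

theorem sib_injective : Function.Injective sib := by
  rintro ⟨_ | _, _⟩ ⟨_ | _, _⟩ h <;> simp_all [sib]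

theorem child_ne_root (i : SeqIdx) : child i ≠ root := by
  simp [child, root]

theorem sib_ne_root : ∀ i : SeqIdx, sib i ≠ root
  | ([], s) => fun h => (PNat.lt_add_left 1 s).ne' (Prod.ext_iff.1 h).2
  | (_ :: _, _) => by simp [sib, root]

theorem child_ne_sib (i : SeqIdx) : ∀ j, child i ≠ sib j
  | ([], _) => by simp [child, sib]
  | (h :: _, _) => fun e =>
    (PNat.lt_add_left 1 h).ne (List.cons.inj (Prod.ext_iff.1 e).1).1

variable {α : Type*} [MeasurableSpace α] (ν : Measure α) [IsProbabilityMeasure ν]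

theorem measurePreserving_comp_child :
    MeasurePreserving (fun x : SeqIdx → α => x ∘ child) (Measure.infinitePi fun _ => ν)
      (Measure.infinitePi fun _ => ν) :=
  ⟨by fun_prop, Measure.map_infinitePi_infinitePi_of_inj (P := fun _ => ν) child_injective⟩

theorem measurePreserving_comp_sib :
    MeasurePreserving (fun x : SeqIdx → α => x ∘ sib) (Measure.infinitePi fun _ => ν)
      (Measure.infinitePi fun _ => ν) :=
  ⟨by fun_prop, Measure.map_infinitePi_infinitePi_of_inj (P := fun _ => ν) sib_injective⟩

theorem indepFun_comp_child_comp_sib :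
    IndepFun (fun x : SeqIdx → α => x ∘ child) (fun x => x ∘ sib)
      (Measure.infinitePi fun _ => ν) := by
  refine indepFun_reindex_of_disjoint_range (X := fun i (x : SeqIdx → α) => x i) (by fun_prop)
    (iIndepFun_infinitePi fun _ => measurable_id) (Set.disjoint_left.2 ?_)
  rintro _ ⟨i, rfl⟩ ⟨j, hj⟩
  exact child_ne_sib i j hj.symm

theorem indepFun_root_comp_child_comp_sib :
    IndepFun (fun x : SeqIdx → α => x root) (fun x => (x ∘ child, x ∘ sib))
      (Measure.infinitePi fun _ => ν) := by
  have hdisj : Disjoint (Set.range fun _ : Unit => root) (Set.range (Sum.elim child sib)) := by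
    rw [Set.disjoint_left]
    rintro _ ⟨_, rfl⟩ ⟨i | i, hi⟩
    exacts [child_ne_root i hi, sib_ne_root i hi]
  have hindep := indepFun_reindex_of_disjoint_range (X := fun i (x : SeqIdx → α) => x i)
    (by fun_prop) (iIndepFun_infinitePi (P := fun _ => ν) fun _ => measurable_id) hdisj
  have heval : Measurable fun y : Unit → α => y () := measurable_pi_apply ()
  exact hindep.comp (ψ := fun y => (y ∘ Sum.inl, y ∘ Sum.inr)) heval (by fun_prop)

theorem measurePreserving_split :
    MeasurePreserving (fun x : SeqIdx → α => (x root, x ∘ child, x ∘ sib))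
      (Measure.infinitePi fun _ => ν)
      (ν.prod ((Measure.infinitePi fun _ => ν).prod (Measure.infinitePi fun _ => ν))) := by
  refine ⟨by fun_prop, ?_⟩
  have hchild := measurePreserving_comp_child ν
  have hsib := measurePreserving_comp_sib ν
  have hroot := measurePreserving_eval_infinitePi (fun _ : SeqIdx => ν) root
  rw [(indepFun_root_comp_child_comp_sib ν).map_prod_eq_prod_map_map hroot.aemeasurable
      (hchild.measurable.prodMk hsib.measurable).aemeasurable,
    (indepFun_comp_child_comp_sib ν).map_prod_eq_prod_map_map hchild.aemeasurable hsib.aemeasurable,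
    hroot.map_eq, hchild.map_eq, hsib.map_eq]

end SeqIdx

/-- A realization of all the clocks `Δ(i)`; together with `clockMeasure` this is the canonical space
on which the whole argument takes place. -/
abbrev Clocks := SeqIdx → ℝ

/-- The law of a family of independent rate-1 exponential clocks. -/
noncomputable def clockMeasure : Measure Clocks := Measure.infinitePi fun _ => expMeasure

instance isProbabilityMeasure_clockMeasure : IsProbabilityMeasure clockMeasure := by
  unfold clockMeasure
  infer_instance

/-- The random variable `e^{-Δ(1)} (b + c)`, where `b` is evaluated in the environment of the
descendants of the node `(1)` and `c` in that of its younger siblings. -/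
noncomputable def branch (b c : Clocks → ℝ) (x : Clocks) : ℝ :=
  Real.exp (-x SeqIdx.root) * (b (x ∘ SeqIdx.child) + c (x ∘ SeqIdx.sib))

section ProductIntegrals

variable {α β : Type*} [MeasurableSpace α] [MeasurableSpace β] {μ : Measure α} {ν : Measure β}
  [IsProbabilityMeasure μ] [IsProbabilityMeasure ν] {f : α → ℝ} {g : β → ℝ}

theorem integral_prod_fst_add_snd (hf : Integrable f μ) (hg : Integrable g ν) :
    ∫ q, (f q.1 + g q.2) ∂μ.prod ν = ∫ x, f x ∂μ + ∫ y, g y ∂ν := by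
  rw [integral_add (hf.comp_fst ν) (hg.comp_snd μ), integral_fun_fst, integral_fun_snd]
  simp only [probReal_univ, one_smul]

theorem integral_prod_fst_add_snd_sq (hf : MemLp f 2 μ) (hg : MemLp g 2 ν) :
    ∫ q, (f q.1 + g q.2) ^ 2 ∂μ.prod ν =
      ∫ x, f x ^ 2 ∂μ + ∫ y, g y ^ 2 ∂ν + 2 * ((∫ x, f x ∂μ) * ∫ y, g y ∂ν) := by
  have hcross : Integrable (fun q : α × β => f q.1 * g q.2) (μ.prod ν) :=
    (hf.integrable one_le_two).mul_prod (hg.integrable one_le_two)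
  have hsq : Integrable (fun q : α × β => f q.1 ^ 2 + g q.2 ^ 2) (μ.prod ν) :=
    (hf.integrable_sq.comp_fst ν).add (hg.integrable_sq.comp_snd μ)
  calc ∫ q, (f q.1 + g q.2) ^ 2 ∂μ.prod ν
      = ∫ q, ((f q.1 ^ 2 + g q.2 ^ 2) + 2 * (f q.1 * g q.2)) ∂μ.prod ν := by
        congr! 2
        ring
    _ = _ := by
        rw [integral_add hsq (hcross.const_mul 2), integral_const_mul, integral_prod_mul,
          integral_prod_fst_add_snd hf.integrable_sq hg.integrable_sq]

end ProductIntegrals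

section Branch

variable {b c : Clocks → ℝ}

theorem measurePreserving_eval_clockMeasure (i : SeqIdx) :
    MeasurePreserving (fun x : Clocks => x i) clockMeasure expMeasure :=
  measurePreserving_eval_infinitePi _ i

theorem measurePreserving_branch (hb : MeasurePreserving b clockMeasure expMeasure)
    (hc : MeasurePreserving c clockMeasure expMeasure) :
    MeasurePreserving (branch b c) clockMeasure expMeasure :=
  measurePreserving_exp_neg_mul_add.comp
    (((MeasurePreserving.id expMeasure).prod (hb.prod hc)).comp
      (SeqIdx.measurePreserving_split expMeasure))

theorem memLp_branch {p : ENNReal} (hb : MemLp b p clockMeasure) (hc : MemLp c p clockMeasure) :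
    MemLp (branch b c) p clockMeasure := by
  have hsum : MemLp (fun x : Clocks => b (x ∘ SeqIdx.child) + c (x ∘ SeqIdx.sib)) p clockMeasure :=
    (hb.comp_measurePreserving (SeqIdx.measurePreserving_comp_child expMeasure)).add
      (hc.comp_measurePreserving (SeqIdx.measurePreserving_comp_sib expMeasure))
  have hexp : Measurable fun x : Clocks => Real.exp (-x SeqIdx.root) := by fun_prop
  refine hsum.of_le (hexp.aestronglyMeasurable.mul hsum.1) ?_
  filter_upwards [(measurePreserving_eval_clockMeasure SeqIdx.root).quasiMeasurePreserving.ae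
    ae_nonneg_expMeasure] with x hx
  rw [branch, norm_mul, Real.norm_of_nonneg (Real.exp_nonneg _)]
  exact mul_le_of_le_one_left (norm_nonneg _) (Real.exp_le_one_iff.2 (neg_nonpos.2 hx))

theorem integral_exp_neg_root_pow_mul (n : ℕ) {F : Clocks × Clocks → ℝ}
    (hF : AEStronglyMeasurable F (clockMeasure.prod clockMeasure)) :
    ∫ x, Real.exp (-x SeqIdx.root) ^ n * F (x ∘ SeqIdx.child, x ∘ SeqIdx.sib) ∂clockMeasure =
      (n + 1 : ℝ)⁻¹ * ∫ q, F q ∂clockMeasure.prod clockMeasure := by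
  have hexp : Continuous fun u : ℝ => Real.exp (-u) ^ n := by fun_prop
  rw [← integral_exp_neg_pow_expMeasure, ← integral_prod_mul]
  exact (SeqIdx.measurePreserving_split expMeasure).hasLaw.integral_comp
    (hexp.aestronglyMeasurable.comp_fst.mul hF.comp_snd)

theorem integral_branch (hb : Integrable b clockMeasure) (hc : Integrable c clockMeasure) :
    ∫ x, branch b c x ∂clockMeasure =
      1 / 2 * (∫ x, b x ∂clockMeasure + ∫ x, c x ∂clockMeasure) := by
  have h := integral_exp_neg_root_pow_mul 1 (hb.1.comp_fst.add hc.1.comp_snd)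
  have hhalf : ((1 : ℕ) + 1 : ℝ)⁻¹ = 1 / 2 := by norm_num
  simpa only [branch, pow_one, Pi.add_apply, integral_prod_fst_add_snd hb hc, hhalf] using h

theorem integral_branch_sq (hb : MemLp b 2 clockMeasure) (hc : MemLp c 2 clockMeasure) :
    ∫ x, branch b c x ^ 2 ∂clockMeasure =
      1 / 3 * (∫ x, b x ^ 2 ∂clockMeasure + ∫ x, c x ^ 2 ∂clockMeasure +
        2 * ((∫ x, b x ∂clockMeasure) * ∫ x, c x ∂clockMeasure)) := by
  have h := integral_exp_neg_root_pow_mul 2 ((hb.1.comp_fst.add hc.1.comp_snd).pow 2)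
  have hthird : ((2 : ℕ) + 1 : ℝ)⁻¹ = 1 / 3 := by norm_num
  simpa only [branch, mul_pow, Pi.add_apply, Pi.pow_apply, integral_prod_fst_add_snd_sq hb hc,
    hthird] using h

theorem branch_mono {b' c' : Clocks → ℝ} (hb : b ≤ b') (hc : c ≤ c') :
    branch b c ≤ branch b' c' := fun _ =>
  mul_le_mul_of_nonneg_left (add_le_add (hb _) (hc _)) (Real.exp_nonneg _)

theorem branch_nonneg (hb : 0 ≤ b) (hc : 0 ≤ c) : 0 ≤ branch b c := fun _ =>
  mul_nonneg (Real.exp_nonneg _) (add_nonneg (hb _) (hc _))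

theorem branch_sub (b c b' c' : Clocks → ℝ) :
    branch (b - b') (c - c') = branch b c - branch b' c' := by
  ext x
  simp only [branch, Pi.sub_apply]
  ring

end Branch

section BranchIterate

variable {b c : Clocks → ℝ}

theorem measurePreserving_branch_iterate (hb : MeasurePreserving b clockMeasure expMeasure)
    (hc : MeasurePreserving c clockMeasure expMeasure) (n : ℕ) :
    MeasurePreserving ((branch b)^[n] c) clockMeasure expMeasure :=
  Function.Iterate.rec (MeasurePreserving · clockMeasure expMeasure)
    hc (fun _ => measurePreserving_branch hb) n

theorem memLp_branch_iterate {p : ENNReal} (hb : MemLp b p clockMeasure)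
    (hc : MemLp c p clockMeasure) (n : ℕ) : MemLp ((branch b)^[n] c) p clockMeasure :=
  Function.Iterate.rec (MemLp · p clockMeasure) hc (fun _ => memLp_branch hb) n

theorem integral_branch_iterate (hb : MemLp b 1 clockMeasure) (hc : MemLp c 1 clockMeasure)
    (n : ℕ) :
    ∫ x, (branch b)^[n] c x ∂clockMeasure =
      (1 - (1 / 2) ^ n) * ∫ x, b x ∂clockMeasure + (1 / 2) ^ n * ∫ x, c x ∂clockMeasure := by
  induction n with
  | zero => simp
  | succ n ih =>
    rw [Function.iterate_succ_apply', integral_branch (memLp_one_iff_integrable.1 hb)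
      (memLp_one_iff_integrable.1 (memLp_branch_iterate hb hc n)), ih]
    ring

theorem integral_branch_iterate_sq (hb : MemLp b 2 clockMeasure) (hc : MemLp c 2 clockMeasure)
    (hb₀ : ∫ x, b x ∂clockMeasure = 0) (n : ℕ) :
    ∫ x, (branch b)^[n] c x ^ 2 ∂clockMeasure =
      1 / 2 * (1 - (1 / 3) ^ n) * ∫ x, b x ^ 2 ∂clockMeasure +
        (1 / 3) ^ n * ∫ x, c x ^ 2 ∂clockMeasure := by
  induction n with
  | zero => simp
  | succ n ih =>
    rw [Function.iterate_succ_apply', integral_branch_sq hb (memLp_branch_iterate hb hc n), ih, hb₀]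
    ring

theorem branch_iterate_mono {b' c' : Clocks → ℝ} (hb : b ≤ b') (hc : c ≤ c') (n : ℕ) :
    (branch b)^[n] c ≤ (branch b')^[n] c' := by
  induction n with
  | zero => exact hc
  | succ n ih =>
    simp only [Function.iterate_succ_apply']
    exact branch_mono hb ih

theorem monotone_branch_iterate_zero (hb : 0 ≤ b) :
    Monotone fun n => (branch b)^[n] (0 : Clocks → ℝ) :=
  Monotone.monotone_iterate_of_le_map (fun _ _ => branch_mono le_rfl) (branch_nonneg hb le_rfl)

theorem branch_iterate_sub (b c b' c' : Clocks → ℝ) (n : ℕ) :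
    (branch (b - b'))^[n] (c - c') = (branch b)^[n] c - (branch b')^[n] c' := by
  induction n with
  | zero => rfl
  | succ n ih => simp only [Function.iterate_succ_apply', ih, branch_sub]

theorem branch_iterate_zero_apply (b : Clocks → ℝ) (n : ℕ) (x : Clocks) :
    (branch b)^[n] 0 x = ∑ j : Fin n, (∏ i ∈ Finset.range ((j : ℕ) + 1),
      Real.exp (-x ([], Nat.succPNat i))) * b (x ∘ SeqIdx.descend j) := by
  induction n generalizing x with
  | zero => rfl
  | succ n ih =>
    rw [Function.iterate_succ_apply', branch, ih, Fin.sum_univ_succ, mul_add, Finset.mul_sum]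
    congr 1
    · rw [Fin.val_zero, zero_add, Finset.prod_range_one]
      rfl
    · refine Finset.sum_congr rfl fun j _ => ?_
      rw [Fin.val_succ, Finset.prod_range_succ' _ (j + 1 : ℕ), ← mul_assoc, mul_comm (Real.exp _)]
      rfl

end BranchIterate

/-- One complete generation of the tree: the nodes `(1), …, (r)` and the common continuation of all
later siblings each carry a copy of `g`. Unlike the bare sum over `(1), …, (r)`, this keeps the
exponential law and the mean exactly. -/
noncomputable def generation (r : ℕ) (g : Clocks → ℝ) : Clocks → ℝ :=
  (branch g)^[r] g

section Generation

variable {g : Clocks → ℝ}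

theorem measurePreserving_generation_iterate (hg : MeasurePreserving g clockMeasure expMeasure)
    (r k : ℕ) : MeasurePreserving ((generation r)^[k] g) clockMeasure expMeasure :=
  Function.Iterate.rec (MeasurePreserving · clockMeasure expMeasure)
    hg (fun _ h => measurePreserving_branch_iterate h h r) k

theorem memLp_generation_iterate {p : ENNReal} (hg : MemLp g p clockMeasure) (r k : ℕ) :
    MemLp ((generation r)^[k] g) p clockMeasure :=
  Function.Iterate.rec (MemLp · p clockMeasure) hg (fun _ h => memLp_branch_iterate h h r) k

theorem integral_generation_iterate (hg : MemLp g 1 clockMeasure) (r k : ℕ) :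
    ∫ x, (generation r)^[k] g x ∂clockMeasure = ∫ x, g x ∂clockMeasure := by
  induction k with
  | zero => rfl
  | succ k ih =>
    have hk := memLp_generation_iterate hg r k
    rw [Function.iterate_succ_apply', generation, integral_branch_iterate hk hk, ih]
    ring

theorem integral_generation_iterate_sq (hg : MemLp g 2 clockMeasure)
    (hg₀ : ∫ x, g x ∂clockMeasure = 0) (r k : ℕ) :
    ∫ x, (generation r)^[k] g x ^ 2 ∂clockMeasure =
      ((1 + (1 / 3) ^ r) / 2) ^ k * ∫ x, g x ^ 2 ∂clockMeasure := by
  induction k with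
  | zero => simp
  | succ k ih =>
    have hk := memLp_generation_iterate hg r k
    have hk₀ : ∫ x, (generation r)^[k] g x ∂clockMeasure = 0 :=
      (integral_generation_iterate (hg.mono_exponent one_le_two) r k).trans hg₀
    rw [Function.iterate_succ_apply', generation, integral_branch_iterate_sq hk hk hk₀, ih]
    ring

theorem generation_iterate_sub (g g' : Clocks → ℝ) (r k : ℕ) :
    (generation r)^[k] (g - g') = (generation r)^[k] g - (generation r)^[k] g' := by
  induction k with
  | zero => rfl
  | succ k ih => simp only [Function.iterate_succ_apply', ih, generation, branch_iterate_sub]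

end Generation

/-- The random variable `Z_{k,r}` on the canonical space of clocks. -/
noncomputable abbrev clockTreeSum (k r : ℕ) : Clocks → ℝ := treeSum Function.eval k r

theorem clockTreeSum_zero (r : ℕ) : clockTreeSum 0 r = 1 := by
  ext
  simp [treeSum]

theorem clockTreeSum_succ (k r : ℕ) :
    clockTreeSum (k + 1) r = (branch (clockTreeSum k r))^[r] 0 := by
  ext x
  rw [branch_iterate_zero_apply, clockTreeSum, treeSum, ← (Fin.consEquiv fun _ => Fin r).sum_comp,
    Fintype.sum_prod_type]
  simp only [treeSum, Finset.mul_sum]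
  refine Finset.sum_congr rfl fun j _ => Finset.sum_congr rfl fun i _ => ?_
  rw [Fin.prod_univ_succ]
  simp [Fin.consEquiv, List.ofFn_succ, SeqIdx.descend]

theorem clockTreeSum_nonneg (k r : ℕ) : 0 ≤ clockTreeSum k r := fun _ =>
  Finset.sum_nonneg fun _ _ => Finset.prod_nonneg fun _ _ => Finset.prod_nonneg fun _ _ =>
    Real.exp_nonneg _

theorem clockTreeSum_mono (k : ℕ) : Monotone (clockTreeSum k) := fun r s hrs => by
  induction k with
  | zero => simp only [clockTreeSum_zero, le_refl]
  | succ k ih =>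
    simp only [clockTreeSum_succ]
    exact (monotone_branch_iterate_zero (clockTreeSum_nonneg k r) hrs).trans
      (branch_iterate_mono ih le_rfl s)

theorem clockTreeSum_le_generation_iterate (k r : ℕ) :
    clockTreeSum k r ≤ (generation r)^[k] 1 := by
  induction k with
  | zero => rw [clockTreeSum_zero, Function.iterate_zero_apply]
  | succ k ih =>
    rw [clockTreeSum_succ, Function.iterate_succ_apply']
    exact branch_iterate_mono ih ((clockTreeSum_nonneg k r).trans ih) r

theorem memLp_clockTreeSum (p : ENNReal) (k r : ℕ) : MemLp (clockTreeSum k r) p clockMeasure := by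
  induction k with
  | zero => exact clockTreeSum_zero r ▸ memLp_const 1
  | succ k ih => simpa only [clockTreeSum_succ] using memLp_branch_iterate ih MemLp.zero r

theorem integral_clockTreeSum (k r : ℕ) :
    ∫ x, clockTreeSum k r x ∂clockMeasure = (1 - (1 / 2) ^ r) ^ k := by
  induction k with
  | zero => simp [clockTreeSum_zero]
  | succ k ih =>
    rw [clockTreeSum_succ, integral_branch_iterate (memLp_clockTreeSum 1 k r) MemLp.zero, ih]
    simp [pow_succ']

section LOne

variable {α : Type*} [MeasurableSpace α] {μ : Measure α}

theorem dist_toLp_one_eq_integral_abs {f g : α → ℝ} (hf : MemLp f 1 μ) (hg : MemLp g 1 μ) :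
    dist (hf.toLp f) (hg.toLp g) = ∫ x, |f x - g x| ∂μ := by
  rw [L1.dist_eq_integral_dist]
  refine integral_congr_ae ?_
  filter_upwards [hf.coeFn_toLp, hg.coeFn_toLp] with x hfx hgx
  rw [hfx, hgx, Real.dist_eq]

theorem dist_toLp_one_of_le {f g : α → ℝ} (hf : MemLp f 1 μ) (hg : MemLp g 1 μ) (hfg : f ≤ g) :
    dist (hf.toLp f) (hg.toLp g) = ∫ x, g x ∂μ - ∫ x, f x ∂μ := by
  rw [dist_comm, dist_toLp_one_eq_integral_abs,
    ← integral_sub (memLp_one_iff_integrable.1 hg) (memLp_one_iff_integrable.1 hf)]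
  simp only [abs_of_nonneg (sub_nonneg.2 (hfg _))]

theorem integral_abs_le_sqrt_integral_sq [IsProbabilityMeasure μ] {f : α → ℝ} (hf : MemLp f 2 μ) :
    ∫ x, |f x| ∂μ ≤ √(∫ x, f x ^ 2 ∂μ) := by
  refine Real.le_sqrt_of_sq_le (sub_nonneg.1 ?_)
  have hvar := variance_eq_sub hf.abs
  simp only [Pi.pow_apply, Pi.abs_apply, sq_abs] at hvar
  exact hvar ▸ variance_nonneg _ _

end LOne

theorem hasLaw_of_tendstoInMeasure {ι Ω E : Type*} [MeasurableSpace Ω] {μ : Measure Ω}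
    [IsProbabilityMeasure μ] [PseudoEMetricSpace E] [MeasurableSpace E] [BorelSpace E]
    {l : Filter ι} [l.NeBot] [l.IsCountablyGenerated] {ν : Measure E} {Y : ι → Ω → E} {Z : Ω → E}
    (hY : ∀ n, HasLaw (Y n) ν μ) (hYZ : TendstoInMeasure μ Y l Z) : HasLaw Z ν μ := by
  obtain ⟨n⟩ := l.nonempty_of_neBot
  have hZ := hYZ.tendstoInDistribution fun m => (hY m).aemeasurable
  have hYn : TendstoInDistribution Y l (Y n) (fun _ => μ) μ :=
    tendstoInDistribution_of_identDistrib n (fun m => (hY n).identDistrib (hY m))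
      ((hY n).identDistrib (hY n))
  exact ⟨hZ.aemeasurable_limit, (tendstoInDistribution_unique Y hZ hYn).trans (hY n).map_eq⟩

theorem one_sub_one_sub_half_pow_pow_le (k r : ℕ) :
    1 - (1 - (1 / 2 : ℝ) ^ r) ^ k ≤ k * (1 / 2) ^ r := by
  have hr : (1 / 2 : ℝ) ^ r ≤ 1 := pow_le_one₀ (by norm_num) (by norm_num)
  have hbernoulli := one_add_mul_le_pow (a := -(1 / 2 : ℝ) ^ r) (by linarith) k
  rw [← sub_eq_add_neg] at hbernoulli
  linarith

/-- `Z_{k,r}` as an element of `L¹`. -/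
noncomputable def clockTreeSumL1 (k r : ℕ) : Lp ℝ 1 clockMeasure :=
  (memLp_clockTreeSum 1 k r).toLp (clockTreeSum k r)

theorem dist_clockTreeSumL1_le_of_le (k : ℕ) {r s : ℕ} (hrs : r ≤ s) :
    dist (clockTreeSumL1 k r) (clockTreeSumL1 k s) ≤ k * (1 / 2) ^ r := by
  rw [clockTreeSumL1, clockTreeSumL1, dist_toLp_one_of_le _ _ (clockTreeSum_mono k hrs),
    integral_clockTreeSum, integral_clockTreeSum]
  have hs : (1 - (1 / 2 : ℝ) ^ s) ^ k ≤ 1 :=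
    pow_le_one₀ (sub_nonneg.2 (pow_le_one₀ (by norm_num) (by norm_num)))
      (sub_le_self _ (by positivity))
  linarith [one_sub_one_sub_half_pow_pow_le k r]

theorem dist_clockTreeSumL1_le (k r s : ℕ) :
    dist (clockTreeSumL1 k r) (clockTreeSumL1 k s) ≤ k * (1 / 2) ^ r + k * (1 / 2) ^ s := by
  have hr : 0 ≤ (k : ℝ) * (1 / 2) ^ r := by positivity
  have hs : 0 ≤ (k : ℝ) * (1 / 2) ^ s := by positivity
  rcases le_total r s with hrs | hsr
  · linarith [dist_clockTreeSumL1_le_of_le k hrs]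
  · rw [dist_comm]
    linarith [dist_clockTreeSumL1_le_of_le k hsr]

theorem integral_abs_generation_iterate_le {g : Clocks → ℝ} (hg : MemLp g 2 clockMeasure)
    (hg₀ : ∫ x, g x ∂clockMeasure = 0) {r : ℕ} (hr : r ≠ 0) (k : ℕ) :
    ∫ x, |(generation r)^[k] g x| ∂clockMeasure ≤
      √((2 / 3) ^ k * ∫ x, g x ^ 2 ∂clockMeasure) := by
  have hthird : (1 / 3 : ℝ) ^ r ≤ 1 / 3 := pow_le_of_le_one (by norm_num) (by norm_num) hr
  have hratio : (1 + (1 / 3 : ℝ) ^ r) / 2 ≤ 2 / 3 := by linarith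
  refine (integral_abs_le_sqrt_integral_sq (memLp_generation_iterate hg r k)).trans ?_
  rw [integral_generation_iterate_sq hg hg₀]
  exact Real.sqrt_le_sqrt (mul_le_mul_of_nonneg_right
    (pow_le_pow_left₀ (by positivity) hratio k) (integral_nonneg fun _ => sq_nonneg _))

/-- The sum `Z_{k,r}` completed by the remainder of every generation, with independent exponential
variables at the leaves; its law is exactly exponential. -/
noncomputable def completedSum (k r : ℕ) : Clocks → ℝ :=
  (generation r)^[k] fun x => x SeqIdx.root

theorem measurePreserving_completedSum (k r : ℕ) :
    MeasurePreserving (completedSum k r) clockMeasure expMeasure :=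
  measurePreserving_generation_iterate (measurePreserving_eval_clockMeasure SeqIdx.root) r k

theorem memLp_two_completedSum (k r : ℕ) : MemLp (completedSum k r) 2 clockMeasure :=
  memLp_two_id_expMeasure.comp_measurePreserving (measurePreserving_completedSum k r)

theorem memLp_one_completedSum (k r : ℕ) : MemLp (completedSum k r) 1 clockMeasure :=
  (memLp_two_completedSum k r).mono_exponent one_le_two

theorem integral_completedSum (k r : ℕ) : ∫ x, completedSum k r x ∂clockMeasure = 1 :=
  (measurePreserving_completedSum k r).hasLaw.integral_eq.trans integral_id_expMeasure

theorem variance_completedSum (k r : ℕ) : Var[completedSum k r; clockMeasure] = 1 :=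
  (measurePreserving_completedSum k r).hasLaw.variance_eq.trans variance_id_expMeasure

theorem integral_abs_completedSum_sub_le (k n : ℕ) {r : ℕ} (hr : r ≠ 0) :
    ∫ x, |completedSum (k + n) r x - (generation r)^[k] 1 x| ∂clockMeasure ≤ √((2 / 3) ^ k) := by
  have hmem : MemLp (completedSum n r - 1) 2 clockMeasure :=
    (memLp_two_completedSum n r).sub (memLp_const 1)
  have hmean : ∫ x, (completedSum n r - 1) x ∂clockMeasure = 0 := by
    simp only [Pi.sub_apply, Pi.one_apply]
    rw [integral_sub (memLp_one_iff_integrable.1 (memLp_one_completedSum n r))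
      (integrable_const 1), integral_completedSum]
    simp
  have hsq : ∫ x, (completedSum n r - 1) x ^ 2 ∂clockMeasure = 1 := by
    rw [← variance_completedSum n r,
      variance_eq_integral (memLp_two_completedSum n r).1.aemeasurable, integral_completedSum]
    rfl
  have h := integral_abs_generation_iterate_le hmem hmean hr k
  rwa [hsq, mul_one, generation_iterate_sub, completedSum, ← Function.iterate_add_apply] at h

/-- `completedSum k r` as an element of `L¹`. -/
noncomputable def completedSumL1 (k r : ℕ) : Lp ℝ 1 clockMeasure :=
  (memLp_one_completedSum k r).toLp (completedSum k r)

theorem dist_completedSumL1_clockTreeSumL1_le (k n : ℕ) {r : ℕ} (hr : r ≠ 0) :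
    dist (completedSumL1 (k + n) r) (clockTreeSumL1 k r) ≤
      √((2 / 3) ^ k) + k * (1 / 2) ^ r := by
  have hone : MemLp (1 : Clocks → ℝ) 1 clockMeasure := memLp_const 1
  have hgen := memLp_generation_iterate hone r k
  refine (dist_triangle _ (hgen.toLp _) _).trans (add_le_add ?_ ?_)
  · rw [completedSumL1, dist_toLp_one_eq_integral_abs]
    exact integral_abs_completedSum_sub_le k n hr
  · rw [clockTreeSumL1, dist_comm, dist_toLp_one_of_le _ _ (clockTreeSum_le_generation_iterate k r),
      integral_generation_iterate hone, integral_clockTreeSum]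
    simpa using one_sub_one_sub_half_pow_pow_le k r

/-- The `L¹` error bound of `dist_completedSumL1_clockTreeSumL1_le` for branching `r = k + 1`, a
choice for which it tends to `0`. -/
noncomputable def diagError (k : ℕ) : ℝ :=
  √((2 / 3) ^ k) + k * (1 / 2) ^ (k + 1)

theorem tendsto_mul_half_pow_succ :
    Tendsto (fun k : ℕ => (k : ℝ) * (1 / 2) ^ (k + 1)) atTop (𝓝 0) := by
  simpa [pow_succ, mul_assoc] using (tendsto_self_mul_const_pow_of_lt_one (r := (1 / 2 : ℝ))
    (by norm_num) (by norm_num)).mul_const 2⁻¹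

theorem tendsto_diagError : Tendsto diagError atTop (𝓝 0) := by
  have hsqrt := (tendsto_pow_atTop_nhds_zero_of_lt_one (r := (2 / 3 : ℝ)) (by norm_num)
    (by norm_num)).sqrt
  have hadd := hsqrt.add tendsto_mul_half_pow_succ
  rwa [Real.sqrt_zero, add_zero] at hadd

theorem dist_clockTreeSumL1_diag_le {k m : ℕ} (hkm : k ≤ m) :
    dist (clockTreeSumL1 k (k + 1)) (clockTreeSumL1 m (m + 1)) ≤
      2 * (diagError k + diagError m) := by
  obtain ⟨n, rfl⟩ := Nat.exists_eq_add_of_le hkm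
  have hr : k + n + 1 ≠ 0 := (k + n).succ_ne_zero
  have hrs : k + 1 ≤ k + n + 1 := Nat.succ_le_succ hkm
  have hwiden := dist_clockTreeSumL1_le_of_le k hrs
  have hk := dist_completedSumL1_clockTreeSumL1_le k n hr
  have hm := dist_completedSumL1_clockTreeSumL1_le (k + n) 0 hr
  have hpow : (k : ℝ) * (1 / 2) ^ (k + n + 1) ≤ k * (1 / 2) ^ (k + 1) := by
    gcongr ?_ * ?_
    exact pow_le_pow_of_le_one (by norm_num) (by norm_num) hrs
  rw [dist_comm] at hk
  have htriangle := dist_triangle4 (clockTreeSumL1 k (k + 1)) (clockTreeSumL1 k (k + n + 1))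
    (completedSumL1 (k + n) (k + n + 1)) (clockTreeSumL1 (k + n) (k + n + 1))
  have hk_nonneg : 0 ≤ √((2 / 3 : ℝ) ^ k) := Real.sqrt_nonneg _
  have hm_nonneg : 0 ≤ diagError (k + n) := by
    unfold diagError
    positivity
  unfold diagError at *
  rw [add_zero] at hm
  linarith

theorem cauchySeq_clockTreeSumL1_diag : CauchySeq fun k => clockTreeSumL1 k (k + 1) := by
  have hbound : Tendsto (fun p : ℕ × ℕ => 2 * (diagError p.1 + diagError p.2)) atTop (𝓝 0) := by
    rw [← prod_atTop_atTop_eq]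
    simpa using ((tendsto_diagError.comp tendsto_fst).add
      (tendsto_diagError.comp tendsto_snd)).const_mul 2
  refine cauchySeq_iff_tendsto_dist_atTop_0.2
    (squeeze_zero (fun _ => dist_nonneg) (fun p => ?_) hbound)
  rcases le_total p.1 p.2 with h | h
  · exact dist_clockTreeSumL1_diag_le h
  · rw [dist_comm, add_comm (diagError p.1)]
    exact dist_clockTreeSumL1_diag_le h

theorem exists_forall_tendsto_clockTreeSumL1 :
    ∃ Z : Lp ℝ 1 clockMeasure,
      (∀ r : ℕ → ℕ, Tendsto (fun k : ℕ => (k : ℝ) * (1 / 2) ^ r k) atTop (𝓝 0) →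
        Tendsto (fun k => clockTreeSumL1 k (r k)) atTop (𝓝 Z)) ∧
      Tendsto (fun k => completedSumL1 k (k + 1)) atTop (𝓝 Z) := by
  obtain ⟨Z, hZ⟩ := cauchySeq_tendsto_of_complete cauchySeq_clockTreeSumL1_diag
  refine ⟨Z, fun r hr => tendsto_of_tendsto_of_dist hZ (squeeze_zero (fun _ => dist_nonneg)
    (fun k => dist_clockTreeSumL1_le k _ _) ?_), tendsto_of_tendsto_of_dist hZ
    (squeeze_zero (fun _ => dist_nonneg) (fun k => ?_) tendsto_diagError)⟩
  · simpa using tendsto_mul_half_pow_succ.add hr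
  · rw [dist_comm]
    exact dist_completedSumL1_clockTreeSumL1_le k 0 k.succ_ne_zero

theorem exists_limit_clockTreeSum :
    ∃ Z : Clocks → ℝ, HasLaw Z expMeasure clockMeasure ∧
      ∀ r : ℕ → ℕ, Tendsto (fun k : ℕ => (k : ℝ) * (1 / 2) ^ r k) atTop (𝓝 0) →
        Tendsto (fun k => eLpNorm (clockTreeSum k (r k) - Z) 1 clockMeasure) atTop (𝓝 0) := by
  obtain ⟨Z, hsum, hcompleted⟩ := exists_forall_tendsto_clockTreeSumL1
  refine ⟨Z, ?_, fun r hr => ?_⟩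
  · exact hasLaw_of_tendstoInMeasure (fun k => (measurePreserving_completedSum k (k + 1)).hasLaw)
      ((tendstoInMeasure_of_tendsto_Lp hcompleted).congr_left fun k =>
        (memLp_one_completedSum k (k + 1)).coeFn_toLp)
  · refine ((Lp.tendsto_Lp_iff_tendsto_eLpNorm' _ _).1 (hsum r hr)).congr fun k => ?_
    exact eLpNorm_congr_ae ((memLp_clockTreeSum 1 k (r k)).coeFn_toLp.sub EventuallyEq.rfl)

theorem treeSum_tendsto_exponential_general {Ω : Type*} [MeasurableSpace Ω] {μ : Measure Ω}
    {Δ : SeqIdx → Ω → ℝ} (hindep : iIndepFun Δ μ) (hdist : ∀ idx, HasLaw (Δ idx) expMeasure μ) :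
    ∃ Z : Ω → ℝ, HasLaw Z expMeasure μ ∧
      ∀ r : ℕ → ℕ, Tendsto (fun k : ℕ => (k : ℝ) * (1 / 2) ^ r k) atTop (𝓝 0) →
        Tendsto (fun k => eLpNorm (treeSum Δ k (r k) - Z) 1 μ) atTop (𝓝 0) := by
  have hclocks : HasLaw (fun ω idx => Δ idx ω) clockMeasure μ :=
    hindep.hasLaw_infinitePi hdist (aemeasurable_pi_lambda _ fun idx => (hdist idx).aemeasurable)
  obtain ⟨Z, hZ, hlim⟩ := exists_limit_clockTreeSum
  refine ⟨Z ∘ fun ω idx => Δ idx ω, hZ.comp hclocks, fun r hr => (hlim r hr).congr fun k => ?_⟩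
  rw [← hclocks.map_eq]
  refine eLpNorm_map_measure ?_ hclocks.aemeasurable
  rw [hclocks.map_eq]
  exact (memLp_clockTreeSum 1 k (r k)).1.sub hZ.aemeasurable.aestronglyMeasurable

theorem tendsto_mul_half_pow_ceil_mul_log {c : ℝ} (hc : 1 < c * Real.log 2) :
    Tendsto (fun k : ℕ => (k : ℝ) * (1 / 2) ^ ⌈c * Real.log k⌉₊) atTop (𝓝 0) := by
  have hpow : Tendsto (fun k : ℕ => (k : ℝ) ^ (-(c * Real.log 2 - 1))) atTop (𝓝 0) :=
    (tendsto_rpow_neg_atTop (sub_pos.2 hc)).comp tendsto_natCast_atTop_atTop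
  refine squeeze_zero' (Eventually.of_forall fun k => by positivity) ?_ hpow
  filter_upwards [eventually_gt_atTop 0] with k hk
  have hk₀ : (0 : ℝ) < k := Nat.cast_pos.2 hk
  calc (k : ℝ) * (1 / 2) ^ ⌈c * Real.log k⌉₊
      = k * (1 / 2 : ℝ) ^ (⌈c * Real.log k⌉₊ : ℝ) := by rw [Real.rpow_natCast]
    _ ≤ k * (1 / 2 : ℝ) ^ (c * Real.log k) := mul_le_mul_of_nonneg_left
        (Real.rpow_le_rpow_of_exponent_ge (by norm_num) (by norm_num) (Nat.le_ceil _)) hk₀.le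
    _ = (k : ℝ) ^ (-(c * Real.log 2 - 1)) := by
        rw [neg_sub, Real.rpow_sub hk₀, Real.rpow_one, Real.rpow_def_of_pos hk₀,
          Real.rpow_def_of_pos (by norm_num), one_div, Real.log_inv, div_eq_mul_inv,
          ← Real.exp_neg]
        ring_nf

theorem measurable_treeSum {Ω : Type*} [MeasurableSpace Ω] {Δ : SeqIdx → Ω → ℝ}
    (hmeas : ∀ idx, Measurable (Δ idx)) (k r : ℕ) : Measurable (treeSum Δ k r) := by
  unfold treeSum
  fun_prop

/-- With `r_k = ⌈(3/2) log k⌉`, the tree functionals `Z_{k, r_k}` converge in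
probability (as `k → ∞`) to a rate-1 exponential random variable `Z` defined on the
same probability space. -/
theorem treeSum_tendsto_exponential {Ω : Type*} [MeasurableSpace Ω] (μ : Measure Ω)
    [IsProbabilityMeasure μ] (Δ : SeqIdx → Ω → ℝ)
    (hmeas : ∀ idx, Measurable (Δ idx))
    (hindep : ProbabilityTheory.iIndepFun Δ μ)
    (hdist : ∀ idx, Measure.map (Δ idx) μ = expMeasure) :
    ∃ Z : Ω → ℝ, Measure.map Z μ = expMeasure ∧
      TendstoInMeasure μ
        (fun k : ℕ => treeSum Δ k (⌈(3 / 2 : ℝ) * Real.log k⌉₊)) atTop Z := by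
  obtain ⟨Z, hZ, hlim⟩ := treeSum_tendsto_exponential_general hindep
    fun idx => ⟨(hmeas idx).aemeasurable, hdist idx⟩
  have hrate : 1 < 3 / 2 * Real.log 2 := by linarith [Real.log_two_gt_d9]
  exact ⟨Z, hZ.map_eq, tendstoInMeasure_of_tendsto_eLpNorm one_ne_zero
    (fun k => (measurable_treeSum hmeas k _).aestronglyMeasurable)
    hZ.aemeasurable.aestronglyMeasurable (hlim _ (tendsto_mul_half_pow_ceil_mul_log hrate))⟩
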